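/- Let n ≥ 2 be an integer with n ≠ 3, and let d ≥ 1 be an integer. If {a·m·c^{d−1}, c^d} is linearly independent over ℚ in OS_n and dim_ℚ (OS_n^{S_n})_{2d+1} ≥ 2, then {a·c^d, m·c^d} is linearly independent over ℚ in OS_n. -/

import Mathlib

noncomputable section

/-- Unordered pairs of distinct elements of `{1, …, n+1}` (as `Fin (n+1)`). -/
abbrev OSidx (n : ℕ) := {s : Sym2 (Fin (n+1)) // ¬ s.IsDiag}

/-- The exterior algebra over `ℚ` on generators indexed by unordered pairs of distinct
elements of `{1, …, n+1}`. -/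
abbrev OSamb (n : ℕ) := ExteriorAlgebra ℚ (OSidx n →₀ ℚ)

/-- The generator `e_{ij} = e_{ji}` of the ambient exterior algebra. -/
def eAmb (n : ℕ) (i j : Fin (n+1)) (h : i ≠ j) : OSamb n :=
  ExteriorAlgebra.ι ℚ (Finsupp.single ⟨s(i,j), by simp [Sym2.mk_isDiag_iff, h]⟩ 1)

/-- The Orlik–Solomon relations for the braid arrangement. -/
inductive OSRel (n : ℕ) : OSamb n → OSamb n → Prop
  | rel (i j k : Fin (n+1)) (hij : i ≠ j) (hjk : j ≠ k) (hik : i ≠ k) :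
      OSRel n (eAmb n i k hik * eAmb n j k hjk - eAmb n i j hij * eAmb n j k hjk
        + eAmb n i j hij * eAmb n i k hik) 0

/-- The Orlik–Solomon algebra `OS_n` of the braid arrangement `A_n`. -/
abbrev OS (n : ℕ) := RingQuot (OSRel n)

/-- The generator `e_{ij}` of `OS_n`, defined to be `0` when `i = j`. -/
def eOS (n : ℕ) (i j : Fin (n+1)) : OS n :=
  if h : i = j then 0 else RingQuot.mkAlgHom ℚ (OSRel n) (eAmb n i j h)

/-- `a = Σ_{1 ≤ i < j ≤ n} e_{ij}`. -/
def aOS (n : ℕ) : OS n :=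
  ∑ p ∈ Finset.univ.filter (fun p : Fin n × Fin n => p.1 < p.2),
    eOS n p.1.castSucc p.2.castSucc

/-- `m = Σ_{1 ≤ i ≤ n} e_{i,n+1}`. -/
def mOS (n : ℕ) : OS n := ∑ i : Fin n, eOS n i.castSucc (Fin.last n)

/-- `c = Σ_{1 ≤ i < j ≤ n} (e_{ij} e_{i,n+1} + e_{ij} e_{j,n+1})`. -/
def cOS (n : ℕ) : OS n :=
  ∑ p ∈ Finset.univ.filter (fun p : Fin n × Fin n => p.1 < p.2),
    (eOS n p.1.castSucc p.2.castSucc * eOS n p.1.castSucc (Fin.last n)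
      + eOS n p.1.castSucc p.2.castSucc * eOS n p.2.castSucc (Fin.last n))

/-- `g = a·m − p·c` with `p = ⌊(n+1)/2⌋`. -/
def gOS (n : ℕ) : OS n := aOS n * mOS n - ((n+1)/2 : ℕ) • cOS n

/-- The action of a permutation on the index set of unordered pairs. -/
def OSpermIdx (n : ℕ) (σ : Equiv.Perm (Fin (n+1))) : OSidx n → OSidx n :=
  fun s => ⟨Sym2.map σ s.1, by
    obtain ⟨⟨x, y⟩, hs⟩ := s
    intro hd
    rw [Sym2.map_pair_eq, Sym2.mk_isDiag_iff] at hd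
    exact hs (Sym2.mk_isDiag_iff.mpr (σ.injective hd))⟩

/-- The algebra endomorphism of the ambient exterior algebra induced by a permutation. -/
def OSpermAmb (n : ℕ) (σ : Equiv.Perm (Fin (n+1))) : OSamb n →ₐ[ℚ] OSamb n :=
  ExteriorAlgebra.lift ℚ
    ⟨(ExteriorAlgebra.ι ℚ).comp (Finsupp.lmapDomain ℚ ℚ (OSpermIdx n σ)),
      fun m => by simp [ExteriorAlgebra.ι_sq_zero]⟩

lemma OSpermAmb_e (n : ℕ) (σ : Equiv.Perm (Fin (n+1))) (i j : Fin (n+1)) (h : i ≠ j) :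
    OSpermAmb n σ (eAmb n i j h) = eAmb n (σ i) (σ j) (fun hh => h (σ.injective hh)) := by
  simp only [OSpermAmb, eAmb, ExteriorAlgebra.lift_ι_apply, LinearMap.comp_apply,
    Finsupp.lmapDomain_apply, Finsupp.mapDomain_single]
  congr 1

/-- The algebra endomorphism of `OS_n` induced by a permutation of `{1, …, n+1}`. -/
def OSperm (n : ℕ) (σ : Equiv.Perm (Fin (n+1))) : OS n →ₐ[ℚ] OS n :=
  RingQuot.liftAlgHom ℚ
    ⟨(RingQuot.mkAlgHom ℚ (OSRel n)).comp (OSpermAmb n σ), by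
      intro x y h
      cases h with
      | rel i j k hij hjk hik =>
        simp only [AlgHom.comp_apply, map_sub, map_add, map_mul, map_zero, OSpermAmb_e]
        have := RingQuot.mkAlgHom_rel ℚ (OSRel.rel (σ i) (σ j) (σ k)
          (fun hh => hij (σ.injective hh)) (fun hh => hjk (σ.injective hh))
          (fun hh => hik (σ.injective hh)))
        simpa [map_sub, map_add, map_mul] using this⟩

/-- The subalgebra of `S_n`-invariants of `OS_n`, where `S_n` is the subgroup of permutations
of `{1, …, n+1}` fixing `n+1`. -/
def OSinv (n : ℕ) : Subalgebra ℚ (OS n) where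
  carrier := {x | ∀ σ : Equiv.Perm (Fin (n+1)), σ (Fin.last n) = Fin.last n → OSperm n σ x = x}
  mul_mem' := fun hx hy σ hσ => by rw [map_mul, hx σ hσ, hy σ hσ]
  add_mem' := fun hx hy σ hσ => by rw [map_add, hx σ hσ, hy σ hσ]
  one_mem' := fun σ _ => map_one _
  zero_mem' := fun σ _ => map_zero _
  algebraMap_mem' := fun r σ hσ => AlgHom.commutes _ r

/-- The subalgebra of `S_{n+1}`-invariants of `OS_n`. -/
def OSinvFull (n : ℕ) : Subalgebra ℚ (OS n) where
  carrier := {x | ∀ σ : Equiv.Perm (Fin (n+1)), OSperm n σ x = x}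
  mul_mem' := fun hx hy σ => by rw [map_mul, hx σ, hy σ]
  add_mem' := fun hx hy σ => by rw [map_add, hx σ, hy σ]
  one_mem' := fun σ => map_one _
  zero_mem' := fun σ => map_zero _
  algebraMap_mem' := fun r σ => AlgHom.commutes _ r

/-- The degree-`d` graded piece of `OS_n`: the image in `OS_n` of the degree-`d` component of
the exterior algebra. -/
def OSdeg (n : ℕ) (d : ℕ) : Submodule ℚ (OS n) :=
  Submodule.map (RingQuot.mkAlgHom ℚ (OSRel n)).toLinearMap
    ((LinearMap.range (ExteriorAlgebra.ι ℚ : (OSidx n →₀ ℚ) →ₗ[ℚ] OSamb n)) ^ d)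

/-- The degree-`d` graded piece of the invariant subalgebra `OS_n^{S_n}`. -/
def OSinvDeg (n : ℕ) (d : ℕ) : Submodule ℚ (OS n) :=
  Subalgebra.toSubmodule (OSinv n) ⊓ OSdeg n d

/-! ### Basic relations -/

lemma eOS_self (n : ℕ) (i : Fin (n+1)) : eOS n i i = 0 := by simp [eOS]

lemma eOS_symm (n : ℕ) (i j : Fin (n+1)) : eOS n i j = eOS n j i := by
  by_cases h : i = j
  · subst h; rfl
  · have h' : ¬ j = i := fun hh => h hh.symm
    simp only [eOS, h, h', dif_neg, not_false_eq_true, eAmb]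
    congr 4
    exact Sym2.eq_swap

lemma eOS_anti (n : ℕ) (i j k l : Fin (n+1)) :
    eOS n i j * eOS n k l = - (eOS n k l * eOS n i j) := by
  unfold eOS
  split_ifs
  · simp
  · simp
  · simp
  · rw [← map_mul, ← map_mul, ← map_neg]
    congr 1
    exact eq_neg_of_add_eq_zero_left (ExteriorAlgebra.ι_add_mul_swap _ _)

lemma eOS_sq (n : ℕ) (i j : Fin (n+1)) : eOS n i j * eOS n i j = 0 := by
  unfold eOS
  split_ifs
  · simp
  · rw [← map_mul, eAmb, ExteriorAlgebra.ι_sq_zero, map_zero]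

lemma eOS_rel (n : ℕ) (i j k : Fin (n+1)) :
    eOS n i k * eOS n j k - eOS n i j * eOS n j k + eOS n i j * eOS n i k = 0 := by
  by_cases hij : i = j
  · subst hij; simp [eOS_self, eOS_sq]
  by_cases hjk : j = k
  · subst hjk; simp [eOS_self, eOS_sq]
  by_cases hik : i = k
  · subst hik; rw [eOS_symm n j i]; simp [eOS_self, eOS_sq]
  have := RingQuot.mkAlgHom_rel ℚ (OSRel.rel i j k hij hjk hik)
  simpa [eOS, hij, hjk, hik] using this

lemma OSperm_e (n : ℕ) (σ : Equiv.Perm (Fin (n+1))) (i j : Fin (n+1)) :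
    OSperm n σ (eOS n i j) = eOS n (σ i) (σ j) := by
  by_cases h : i = j
  · subst h; simp [eOS_self]
  · have h' : σ i ≠ σ j := fun hh => h (σ.injective hh)
    simp only [eOS, h, h', dif_neg, not_false_eq_true, OSperm]
    rw [RingQuot.liftAlgHom_mkAlgHom_apply]
    simp [OSpermAmb_e]

/-! ### Path monomials -/

/-- The product of the generators along a path of vertices. -/
def pathOS (n : ℕ) : List (Fin (n+1)) → OS n
  | [] => 1
  | [_] => 1
  | v :: w :: l => eOS n v w * pathOS n (w :: l)

lemma pathOS_append (n : ℕ) (l₁ : List (Fin (n+1))) (v : Fin (n+1)) (l₂ : List (Fin (n+1))) :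
    pathOS n (l₁ ++ v :: l₂) = pathOS n (l₁ ++ [v]) * pathOS n (v :: l₂) := by
  induction l₁ with
  | nil => simp [pathOS]
  | cons x l ih =>
    cases l with
    | nil => simp [pathOS]
    | cons y l => simp only [List.cons_append, pathOS] at ih ⊢; rw [ih, mul_assoc]

lemma pathOS_comm (n : ℕ) (l : List (Fin (n+1))) :
    ∃ ε : ℚ, ∀ i j, pathOS n l * eOS n i j = ε • (eOS n i j * pathOS n l) := by
  induction l with
  | nil => exact ⟨1, by simp [pathOS]⟩
  | cons x l ih =>
    cases l with
    | nil => exact ⟨1, by simp [pathOS]⟩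
    | cons y l =>
      obtain ⟨ε, h⟩ := ih
      refine ⟨-ε, fun i j => ?_⟩
      simp only [pathOS]
      rw [mul_assoc, h, mul_smul_comm, ← mul_assoc, eOS_anti, neg_mul, smul_neg, neg_smul,
        mul_assoc]

lemma pathOS_perm (n : ℕ) (σ : Equiv.Perm (Fin (n+1))) (l : List (Fin (n+1))) :
    OSperm n σ (pathOS n l) = pathOS n (l.map σ) := by
  induction l with
  | nil => simp [pathOS]
  | cons x l ih =>
    cases l with
    | nil => simp [pathOS]
    | cons y l => simp only [List.map_cons, pathOS, map_mul, OSperm_e] at ih ⊢; rw [ih]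

/-- Inserting a new vertex `t`, attached at `v`, into a path. -/
lemma pathOS_insert (n : ℕ) (t : Fin (n+1)) (l₂ : List (Fin (n+1))) :
    ∀ (l₁ : List (Fin (n+1))) (v : Fin (n+1)),
    pathOS n (l₁ ++ v :: l₂) * eOS n v t ∈
      Submodule.span ℚ {x | ∃ l', l'.Perm (t :: l₂) ∧ x = pathOS n (l₁ ++ v :: l')} := by
  induction l₂ with
  | nil =>
    intro l₁ v
    refine Submodule.subset_span ⟨[t], List.Perm.refl _, ?_⟩
    rw [pathOS_append n l₁ v [t]]
    simp [pathOS]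
  | cons w l ih =>
    intro l₁ v
    have key : pathOS n (l₁ ++ v :: w :: l) * eOS n v t ∈ Submodule.span ℚ
        {pathOS n (l₁ ++ v :: w :: l) * eOS n w t, pathOS n (l₁ ++ v :: t :: w :: l)} := by
      obtain ⟨ε, h⟩ := pathOS_comm n (w :: l)
      have hr := eOS_rel n v w t
      have hr' : eOS n v w * eOS n v t = eOS n v w * eOS n w t - eOS n v t * eOS n t w := by
        rw [eOS_symm n t w, ← sub_eq_zero, ← hr]; abel
      have e1 : pathOS n (l₁ ++ v :: w :: l) * eOS n v t =
          pathOS n (l₁ ++ v :: w :: l) * eOS n w t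
            + (-ε) • pathOS n (l₁ ++ v :: t :: w :: l) := by
        rw [pathOS_append n l₁ v (w :: l), pathOS_append n l₁ v (t :: w :: l)]
        simp only [pathOS]
        rw [mul_assoc, mul_assoc, h, mul_assoc, mul_assoc, h]
        simp only [mul_smul_comm]
        rw [← mul_assoc (eOS n v w), hr']
        simp only [sub_mul, mul_sub, smul_sub, mul_assoc, neg_smul]
        abel
      rw [e1]
      exact Submodule.add_mem _ (Submodule.subset_span (by simp))
        (Submodule.smul_mem _ _ (Submodule.subset_span (by simp)))
    refine (Submodule.span_le.2 ?_) key
    rintro x (rfl | rfl)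
    · have := ih (l₁ ++ [v]) w
      simp only [List.append_assoc, List.singleton_append] at this
      refine (Submodule.span_mono ?_) this
      rintro x ⟨l', hl', rfl⟩
      exact ⟨w :: l', (hl'.cons w).trans (List.Perm.swap _ _ _), rfl⟩
    · exact Submodule.subset_span ⟨t :: w :: l, List.Perm.refl _, rfl⟩

/-- The span of the generators with both end points in a set of vertices. -/
def genOS (n : ℕ) (S : Set (Fin (n+1))) : Submodule ℚ (OS n) :=
  Submodule.span ℚ {x | ∃ i ∈ S, ∃ j ∈ S, x = eOS n i j}

/-- The span of the generators joining `t` to a set of vertices. -/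
def starOS (n : ℕ) (t : Fin (n+1)) (S : Set (Fin (n+1))) : Submodule ℚ (OS n) :=
  Submodule.span ℚ {x | ∃ i ∈ S, x = eOS n i t}

lemma genOS_insert (n : ℕ) (t : Fin (n+1)) (S : Set (Fin (n+1))) :
    genOS n (insert t S) ≤ genOS n S ⊔ starOS n t S := by
  refine Submodule.span_le.2 ?_
  rintro x ⟨i, hi, j, hj, rfl⟩
  rcases hi with rfl | hi <;> rcases hj with rfl | hj
  · rw [eOS_self]; exact Submodule.zero_mem _
  · rw [eOS_symm]; exact Submodule.mem_sup_right (Submodule.subset_span ⟨j, hj, rfl⟩)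
  · exact Submodule.mem_sup_right (Submodule.subset_span ⟨i, hi, rfl⟩)
  · exact Submodule.mem_sup_left (Submodule.subset_span ⟨i, hi, j, hj, rfl⟩)

lemma starOS_mul_gen (n : ℕ) (t : Fin (n+1)) (S : Set (Fin (n+1))) :
    starOS n t S * genOS n S ≤ genOS n S * starOS n t S := by
  unfold starOS genOS
  rw [Submodule.span_mul_span]
  refine Submodule.span_le.2 ?_
  rintro x ⟨_, ⟨i, hi, rfl⟩, _, ⟨j, hj, k, hk, rfl⟩, rfl⟩
  show eOS n i t * eOS n j k ∈ _
  rw [eOS_anti]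
  exact Submodule.neg_mem _ (Submodule.mul_mem_mul (Submodule.subset_span ⟨j, hj, k, hk, rfl⟩)
    (Submodule.subset_span ⟨i, hi, rfl⟩))

lemma starOS_mul_star (n : ℕ) (t : Fin (n+1)) (S : Set (Fin (n+1))) :
    starOS n t S * starOS n t S ≤ genOS n S * starOS n t S := by
  rw [starOS, Submodule.span_mul_span]
  refine Submodule.span_le.2 ?_
  rintro x ⟨_, ⟨i, hi, rfl⟩, _, ⟨j, hj, rfl⟩, rfl⟩
  show eOS n i t * eOS n j t ∈ _
  have : eOS n i t * eOS n j t = eOS n i j * eOS n j t - eOS n i j * eOS n i t := by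
    rw [← sub_eq_zero, ← eOS_rel n i j t]; abel
  rw [this]
  exact Submodule.sub_mem _
    (Submodule.mul_mem_mul (Submodule.subset_span ⟨i, hi, j, hj, rfl⟩)
      (Submodule.subset_span ⟨j, hj, rfl⟩))
    (Submodule.mul_mem_mul (Submodule.subset_span ⟨i, hi, j, hj, rfl⟩)
      (Submodule.subset_span ⟨i, hi, rfl⟩))

lemma genOS_insert_pow (n : ℕ) (t : Fin (n+1)) (S : Set (Fin (n+1))) (d : ℕ) :
    genOS n (insert t S) ^ (d+1) ≤ genOS n S ^ (d+1) ⊔ genOS n S ^ d * starOS n t S := by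
  induction d with
  | zero => simpa using genOS_insert n t S
  | succ d ih =>
    rw [pow_succ]
    refine (mul_le_mul' ih (genOS_insert n t S)).trans ?_
    rw [Submodule.sup_mul, Submodule.mul_sup, Submodule.mul_sup]
    refine sup_le (sup_le ?_ le_sup_right) (sup_le ?_ ?_)
    · rw [← pow_succ]; exact le_sup_left
    · refine le_trans ?_ le_sup_right
      rw [mul_assoc, pow_succ, mul_assoc]
      exact mul_le_mul' le_rfl (starOS_mul_gen n t S)
    · refine le_trans ?_ le_sup_right
      rw [mul_assoc, pow_succ, mul_assoc]
      exact mul_le_mul' le_rfl (starOS_mul_star n t S)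

lemma genOS_list (n : ℕ) (r : Fin (n+1)) (l : List (Fin (n+1))) :
    (∀ k, l.length < k → genOS n {x | x ∈ r :: l} ^ k = ⊥) ∧
    genOS n {x | x ∈ r :: l} ^ l.length ≤
      Submodule.span ℚ {x | ∃ l', List.Perm l' l ∧ x = pathOS n (r :: l')} := by
  induction l with
  | nil =>
    have h0 : genOS n {x | x ∈ [r]} = ⊥ := by
      rw [genOS, Submodule.span_eq_bot]
      rintro x ⟨i, hi, j, hj, rfl⟩
      rw [List.mem_singleton.1 hi, List.mem_singleton.1 hj, eOS_self]
    constructor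
    · intro k hk
      obtain ⟨k, rfl⟩ : ∃ m, k = m + 1 := ⟨k - 1, by simp at hk; omega⟩
      rw [h0, pow_succ, Submodule.mul_bot]
    · rw [List.length_nil, pow_zero, Submodule.one_eq_span]
      refine Submodule.span_mono ?_
      rintro x rfl
      exact ⟨[], List.Perm.refl _, rfl⟩
  | cons t l ih =>
    obtain ⟨ih1, ih2⟩ := ih
    have hS : {x | x ∈ r :: t :: l} = insert t {x | x ∈ r :: l} := by
      ext x; simp; tauto
    rw [hS]
    constructor
    · intro k hk
      obtain ⟨k, rfl⟩ : ∃ m, k = m + 1 := ⟨k - 1, by simp at hk; omega⟩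
      simp only [List.length_cons] at hk
      rw [eq_bot_iff]
      refine (genOS_insert_pow n t _ k).trans ?_
      rw [ih1 _ (by omega), ih1 _ (by omega), Submodule.bot_mul, sup_bot_eq]
    · rw [List.length_cons]
      refine (genOS_insert_pow n t _ _).trans ?_
      rw [ih1 _ (by omega), bot_sup_eq]
      refine (mul_le_mul' ih2 le_rfl).trans ?_
      rw [starOS, Submodule.span_mul_span]
      refine Submodule.span_le.2 ?_
      rintro x ⟨_, ⟨l', hl', rfl⟩, _, ⟨j, hj, rfl⟩, rfl⟩
      show pathOS n (r :: l') * eOS n j t ∈ _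
      have hj' : j ∈ r :: l' := by
        simp only [List.mem_cons, Set.mem_setOf_eq] at hj ⊢
        rwa [hl'.mem_iff]
      rw [List.mem_cons] at hj'
      by_cases hjr : j = r
      · subst hjr
        refine (Submodule.span_mono ?_) (pathOS_insert n t l' [] j)
        rintro x ⟨l'', h, rfl⟩
        exact ⟨l'', h.trans (hl'.cons t), rfl⟩
      · obtain ⟨s₁, s₂, rfl⟩ := List.append_of_mem (hj'.resolve_left hjr)
        refine (Submodule.span_mono ?_) (pathOS_insert n t s₂ (r :: s₁) j)
        rintro x ⟨l'', h, rfl⟩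
        refine ⟨s₁ ++ j :: l'', ?_, rfl⟩
        refine List.Perm.trans ?_ (hl'.cons t)
        refine ((h.cons j).append_left s₁).trans ?_
        refine ((List.Perm.swap t j s₂).append_left s₁).trans ?_
        exact List.perm_middle

lemma OSdeg_le (n k : ℕ) :
    OSdeg n k ≤ genOS n {x | x ∈ Fin.last n :: (List.finRange n).map Fin.castSucc} ^ k := by
  have hall : ∀ x : Fin (n+1), x ∈ Fin.last n :: (List.finRange n).map Fin.castSucc := by
    intro x
    refine Fin.lastCases ?_ (fun i => ?_) x
    · simp
    · simp
  rw [OSdeg, Submodule.map_pow]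
  refine pow_le_pow_left' ?_ k
  rintro _ ⟨_, ⟨f, rfl⟩, rfl⟩
  induction f using Finsupp.induction_linear with
  | zero => simp
  | add f g hf hg => rw [map_add, map_add]; exact Submodule.add_mem _ hf hg
  | single s q =>
    obtain ⟨⟨i, j⟩, hs⟩ := s
    have hij : i ≠ j := fun h => hs (Sym2.mk_isDiag_iff.mpr h)
    rw [← mul_one q, ← smul_eq_mul, ← Finsupp.smul_single, map_smul, map_smul]
    refine Submodule.smul_mem _ _ (Submodule.subset_span ⟨i, hall i, j, hall j, ?_⟩)
    simp only [eOS, hij, dif_neg, not_false_eq_true]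
    rfl

lemma exists_perm_of_list_perm {α : Type*} [DecidableEq α] {l' l : List α} (h : l'.Perm l)
    (hl : l.Nodup) : ∃ σ : Equiv.Perm α, (∀ x, x ∉ l → σ x = x) ∧ l' = l.map σ := by
  induction h with
  | nil => exact ⟨1, by simp, by simp⟩
  | cons x h ih =>
    rw [List.nodup_cons] at hl
    obtain ⟨σ, h1, h2⟩ := ih hl.2
    exact ⟨σ, fun y hy => h1 y (fun hh => hy (List.mem_cons_of_mem _ hh)),
      by rw [List.map_cons, h1 x hl.1, h2]⟩
  | swap x y l =>
    refine ⟨Equiv.swap x y, fun z hz => ?_, ?_⟩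
    · simp only [List.mem_cons, not_or] at hz
      exact Equiv.swap_apply_of_ne_of_ne hz.1 hz.2.1
    · simp only [List.nodup_cons, List.mem_cons, not_or] at hl
      simp only [List.map_cons, Equiv.swap_apply_left, Equiv.swap_apply_right]
      congr 2
      conv_lhs => rw [← List.map_id l]
      refine List.map_congr_left fun z hz => ?_
      rw [Equiv.swap_apply_of_ne_of_ne]
      · rfl
      · rintro rfl; exact hl.1.2 hz
      · rintro rfl; exact hl.2.1 hz
  | trans h₁ h₂ ih₁ ih₂ =>
    obtain ⟨σ, h1, h2⟩ := ih₂ hl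
    obtain ⟨τ, h3, h4⟩ := ih₁ (h₂.nodup_iff.2 hl)
    refine ⟨σ.trans τ, fun x hx => ?_, ?_⟩
    · rw [Equiv.trans_apply, h1 x hx, h3 x (fun hh => hx (h₂.mem_iff.1 hh))]
    · rw [h4, h2, List.map_map]; rfl

/-- Sum over the stabiliser of the last vertex. -/
def avgOS (n : ℕ) : OS n →ₗ[ℚ] OS n :=
  ∑ σ : {σ : Equiv.Perm (Fin (n+1)) // σ (Fin.last n) = Fin.last n}, (OSperm n σ.1).toLinearMap

lemma avgOS_apply (n : ℕ) (x : OS n) : avgOS n x =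
    ∑ σ : {σ : Equiv.Perm (Fin (n+1)) // σ (Fin.last n) = Fin.last n}, OSperm n σ.1 x := by
  simp [avgOS]

lemma avgOS_path (n : ℕ) (τ : Equiv.Perm (Fin (n+1))) (hτ : τ (Fin.last n) = Fin.last n)
    (l : List (Fin (n+1))) : avgOS n (pathOS n (l.map τ)) = avgOS n (pathOS n l) := by
  have hτ' : τ⁻¹ (Fin.last n) = Fin.last n := by rw [Equiv.Perm.inv_eq_iff_eq, hτ]
  rw [avgOS_apply, avgOS_apply]
  let E : {σ : Equiv.Perm (Fin (n+1)) // σ (Fin.last n) = Fin.last n} ≃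
      {σ : Equiv.Perm (Fin (n+1)) // σ (Fin.last n) = Fin.last n} :=
    ⟨fun σ => ⟨σ.1 * τ, by rw [Equiv.Perm.mul_apply, hτ, σ.2]⟩,
     fun σ => ⟨σ.1 * τ⁻¹, by rw [Equiv.Perm.mul_apply, hτ', σ.2]⟩,
     fun σ => by simp, fun σ => by simp⟩
  refine Fintype.sum_equiv E _ _ ?_
  intro σ
  show OSperm n σ.1 _ = OSperm n (σ.1 * τ) _
  rw [pathOS_perm, pathOS_perm, List.map_map]
  rfl

lemma OSinvDeg_finrank_le (n k : ℕ) (hk : n ≤ k) : Module.finrank ℚ (OSinvDeg n k) ≤ 1 := by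
  set l := (List.finRange n).map (Fin.castSucc : Fin n → Fin (n+1)) with hl
  have hlen : l.length = n := by simp [hl]
  have hnd : l.Nodup := (List.nodup_finRange n).map (Fin.castSucc_injective n)
  have hr : Fin.last n ∉ l := by
    rw [hl, List.mem_map]
    rintro ⟨i, -, hi⟩
    exact (Fin.castSucc_lt_last i).ne hi
  obtain ⟨g1, g2⟩ := genOS_list n (Fin.last n) l
  rcases hk.lt_or_eq with hk | rfl
  · have : OSinvDeg n k = ⊥ := by
      rw [eq_bot_iff]
      exact inf_le_right.trans ((OSdeg_le n k).trans (g1 k (by omega)).le)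
    rw [this]; simp
  · have hle : OSinvDeg n n ≤ Submodule.span ℚ {avgOS n (pathOS n (Fin.last n :: l))} := by
      rintro u ⟨hu1, hu2⟩
      have hu3 := OSdeg_le n n hu2
      rw [← hl] at hu3
      rw [hlen] at g2
      have hu4 := Submodule.mem_map_of_mem (f := avgOS n) (g2 hu3)
      have hu5 : avgOS n u ∈ Submodule.span ℚ {avgOS n (pathOS n (Fin.last n :: l))} := by
        rw [Submodule.map_span] at hu4
        refine (Submodule.span_mono ?_) hu4
        rintro _ ⟨_, ⟨l', hl', rfl⟩, rfl⟩
        obtain ⟨τ, h1, h2⟩ := exists_perm_of_list_perm hl' hnd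
        have h3 : Fin.last n :: l' = (Fin.last n :: l).map τ := by
          rw [List.map_cons, h1 _ hr, h2]
        rw [h3, avgOS_path n τ (h1 _ hr)]
        rfl
      have hu6 : avgOS n u = (Fintype.card {σ : Equiv.Perm (Fin (n+1)) //
          σ (Fin.last n) = Fin.last n} : ℚ) • u := by
        rw [avgOS_apply, Finset.sum_congr rfl (fun σ _ => hu1 σ.1 σ.2)]
        simp [Finset.card_univ, Nat.cast_smul_eq_nsmul]
      have hne : (Fintype.card {σ : Equiv.Perm (Fin (n+1)) //
          σ (Fin.last n) = Fin.last n} : ℚ) ≠ 0 := by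
        have : Nonempty {σ : Equiv.Perm (Fin (n+1)) // σ (Fin.last n) = Fin.last n} := ⟨⟨1, rfl⟩⟩
        exact_mod_cast Fintype.card_ne_zero
      rw [hu6] at hu5
      have := Submodule.smul_mem _ (Fintype.card {σ : Equiv.Perm (Fin (n+1)) //
          σ (Fin.last n) = Fin.last n} : ℚ)⁻¹ hu5
      rwa [smul_smul, inv_mul_cancel₀ hne, one_smul] at this
    refine (Submodule.finrank_mono hle).trans ?_
    exact (finrank_span_le_card _).trans (by simp)

/-! ### A homomorphism to an exterior algebra -/

/-- The target exterior algebra. -/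
abbrev LamOS := ExteriorAlgebra ℚ (ℕ →₀ ℚ)

/-- The homomorphism `e_{ij} ↦ w (min i j)`. -/
def phiOS (n : ℕ) (w : ℕ → (ℕ →₀ ℚ)) : OS n →ₐ[ℚ] LamOS :=
  RingQuot.liftAlgHom ℚ
    ⟨ExteriorAlgebra.lift ℚ
      ⟨(ExteriorAlgebra.ι ℚ).comp
        (Finsupp.linearCombination ℚ (fun s : OSidx n => w (s.1.inf : Fin (n+1)))),
        fun m => by simp⟩, by
      intro x y h
      cases h with
      | rel i j k hij hjk hik =>
        have key : ∀ a b : ℕ →₀ ℚ, ExteriorAlgebra.ι ℚ a * ExteriorAlgebra.ι ℚ b +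
          ExteriorAlgebra.ι ℚ b * ExteriorAlgebra.ι ℚ a = 0 := ExteriorAlgebra.ι_add_mul_swap
        simp only [map_sub, map_add, map_mul, map_zero, eAmb, ExteriorAlgebra.lift_ι_apply,
          LinearMap.comp_apply, Finsupp.linearCombination_single, one_smul, Sym2.inf_mk]
        rcases lt_or_gt_of_ne hij with h1 | h1 <;> rcases lt_or_gt_of_ne hjk with h2 | h2 <;>
        rcases lt_or_gt_of_ne hik with h3 | h3 <;>
        first
        | (exfalso; omega)
        | (simp only [inf_of_le_left h1.le, inf_of_le_right h1.le, inf_of_le_left h2.le,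
            inf_of_le_right h2.le, inf_of_le_left h3.le, inf_of_le_right h3.le,
            ExteriorAlgebra.ι_sq_zero, sub_self, add_zero, zero_sub, sub_zero,
            neg_add_cancel, key])⟩

lemma phiOS_e (n : ℕ) (w : ℕ → (ℕ →₀ ℚ)) (i j : Fin (n+1)) (h : i < j) :
    phiOS n w (eOS n i j) = ExteriorAlgebra.ι ℚ (w i) := by
  simp only [eOS, h.ne, dif_neg, not_false_eq_true, phiOS]
  rw [RingQuot.liftAlgHom_mkAlgHom_apply]
  simp only [eAmb, ExteriorAlgebra.lift_ι_apply,
          LinearMap.comp_apply, Finsupp.linearCombination_single, one_smul, Sym2.inf_mk,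
          inf_of_le_left h.le]

lemma sum_pairs {M : Type*} [AddCommMonoid M] (n : ℕ) (f : ℕ → ℕ → M) :
    ∑ p ∈ Finset.univ.filter (fun p : Fin n × Fin n => p.1 < p.2), f p.1 p.2 =
      ∑ j ∈ Finset.range n, ∑ i ∈ Finset.range j, f i j := by
  rw [Finset.sum_filter, Fintype.sum_prod_type, Finset.sum_comm,
    ← Fin.sum_univ_eq_sum_range (fun j => ∑ i ∈ Finset.range j, f i j)]
  refine Finset.sum_congr rfl fun j _ => ?_
  have h1 : ∑ i : Fin n, (if i < j then f i j else 0) =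
      ∑ i ∈ Finset.range n, if i < (j : ℕ) then f i j else 0 := by
    rw [← Fin.sum_univ_eq_sum_range (fun i => if i < (j : ℕ) then f i j else 0)]
    rfl
  refine Eq.trans h1 ?_
  rw [← Finset.sum_filter]
  refine Finset.sum_congr ?_ fun _ _ => rfl
  ext i
  simp only [Finset.mem_filter, Finset.mem_range]
  have := j.2
  omega

lemma sum_weight (y : ℕ → LamOS) (n : ℕ) :
    ∑ j ∈ Finset.range n, ∑ i ∈ Finset.range j, y i =
      ((n : ℚ) - 1) • ∑ i ∈ Finset.range n, y i - ∑ i ∈ Finset.range n, (i : ℚ) • y i := by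
  induction n with
  | zero => simp
  | succ n ih =>
    rw [Finset.sum_range_succ, ih, Finset.sum_range_succ (fun i => y i),
      Finset.sum_range_succ (fun i => (i : ℚ) • y i)]
    push_cast
    module

section
variable (n : ℕ) (w : ℕ → (ℕ →₀ ℚ))

lemma phiOS_m : phiOS n w (mOS n) = ∑ i ∈ Finset.range n, ExteriorAlgebra.ι ℚ (w i) := by
  rw [mOS, map_sum, ← Fin.sum_univ_eq_sum_range (fun i => ExteriorAlgebra.ι ℚ (w i))]
  refine Finset.sum_congr rfl fun i _ => ?_
  rw [phiOS_e n w _ _ (Fin.castSucc_lt_last i)]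
  rfl

lemma phiOS_a : phiOS n w (aOS n) =
    ((n : ℚ) - 1) • ∑ i ∈ Finset.range n, ExteriorAlgebra.ι ℚ (w i) -
      ∑ i ∈ Finset.range n, (i : ℚ) • ExteriorAlgebra.ι ℚ (w i) := by
  rw [← sum_weight, ← sum_pairs n (fun i _ => ExteriorAlgebra.ι ℚ (w i)), aOS, map_sum]
  refine Finset.sum_congr rfl fun p hp => ?_
  rw [phiOS_e n w _ _ (Fin.castSucc_lt_castSucc_iff.2 (Finset.mem_filter.1 hp).2)]
  rfl

lemma phiOS_c : phiOS n w (cOS n) =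
    ∑ j ∈ Finset.range n, (∑ i ∈ Finset.range j, ExteriorAlgebra.ι ℚ (w i)) *
      ExteriorAlgebra.ι ℚ (w j) := by
  simp only [Finset.sum_mul]
  rw [← sum_pairs n (fun i j => ExteriorAlgebra.ι ℚ (w i) * ExteriorAlgebra.ι ℚ (w j)),
    cOS, map_sum]
  refine Finset.sum_congr rfl fun p hp => ?_
  rw [map_add, map_mul, map_mul,
    phiOS_e n w _ _ (Fin.castSucc_lt_castSucc_iff.2 (Finset.mem_filter.1 hp).2),
    phiOS_e n w _ _ (Fin.castSucc_lt_last _), phiOS_e n w _ _ (Fin.castSucc_lt_last _),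
    ExteriorAlgebra.ι_sq_zero, zero_add]
  rfl

end

/-! ### Symplectic coordinates -/

/-- Standard basis vectors. -/
def zV (k : ℕ) : ℕ →₀ ℚ := Finsupp.single k 1

/-- First half of the symplectic coordinates. -/
def pL (k : ℕ) : LamOS := ExteriorAlgebra.ι ℚ (zV (2*k))

/-- Second half of the symplectic coordinates. -/
def qL (k : ℕ) : LamOS := ExteriorAlgebra.ι ℚ (zV (2*k+1))

/-- Partial sums of the second half, as vectors. -/
def sV (k : ℕ) : ℕ →₀ ℚ := ∑ j ∈ Finset.range k, zV (2*j+1)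

/-- The images of the generators. -/
def wV (d i : ℕ) : ℕ →₀ ℚ :=
  if i < 2*d+2 then
    if i % 2 = 0 then zV (2*(i/2)) - sV (i/2) else zV (2*(i/2)+1) - zV (2*(i/2)) + sV (i/2)
  else 0

/-- Partial sums in the exterior algebra. -/
def sL (k : ℕ) : LamOS := ExteriorAlgebra.ι ℚ (sV k)

/-- Partial symplectic form. -/
def omL (k : ℕ) : LamOS := ∑ j ∈ Finset.range k, pL j * qL j

/-- Partial product. -/
def topL : ℕ → LamOS
  | 0 => 1
  | k+1 => topL k * (pL k * qL k)

lemma sL_succ (k : ℕ) : sL (k+1) = sL k + qL k := by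
  simp [sL, sV, qL, Finset.sum_range_succ]

lemma wV_even (d k : ℕ) (h : k ≤ d) : ExteriorAlgebra.ι ℚ (wV d (2*k)) = pL k - sL k := by
  have h1 : 2*k < 2*d+2 := by omega
  have h2 : 2*k % 2 = 0 := by omega
  have h3 : 2*k/2 = k := by omega
  rw [wV, if_pos h1, if_pos h2, h3, map_sub]; rfl

lemma wV_odd (d k : ℕ) (h : k ≤ d) :
    ExteriorAlgebra.ι ℚ (wV d (2*k+1)) = qL k - pL k + sL k := by
  have h1 : 2*k+1 < 2*d+2 := by omega
  have h2 : ¬ (2*k+1) % 2 = 0 := by omega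
  have h3 : (2*k+1)/2 = k := by omega
  rw [wV, if_pos h1, if_neg h2, h3, map_add, map_sub]; rfl

lemma wV_zero (d i : ℕ) (h : 2*d+2 ≤ i) : ExteriorAlgebra.ι ℚ (wV d i) = 0 := by
  rw [wV, if_neg (by omega), map_zero]

lemma sum_w (d k : ℕ) (h : k ≤ d+1) :
    ∑ i ∈ Finset.range (2*k), ExteriorAlgebra.ι ℚ (wV d i) = sL k := by
  induction k with
  | zero => simp [sL, sV]
  | succ k ih =>
    rw [show 2*(k+1) = 2*k+1+1 by ring, Finset.sum_range_succ, Finset.sum_range_succ,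
      ih (by omega), wV_even d k (by omega), wV_odd d k (by omega), sL_succ]
    abel

lemma ι_anti (a b : ℕ →₀ ℚ) : ExteriorAlgebra.ι ℚ a * ExteriorAlgebra.ι ℚ b =
    - (ExteriorAlgebra.ι ℚ b * ExteriorAlgebra.ι ℚ a) :=
  eq_neg_of_add_eq_zero_left (ExteriorAlgebra.ι_add_mul_swap _ _)

lemma pL_sq (k : ℕ) : pL k * pL k = 0 := ExteriorAlgebra.ι_sq_zero _
lemma qL_sq (k : ℕ) : qL k * qL k = 0 := ExteriorAlgebra.ι_sq_zero _
lemma sL_sq (k : ℕ) : sL k * sL k = 0 := ExteriorAlgebra.ι_sq_zero _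
lemma qp_anti (k : ℕ) : qL k * pL k = - (pL k * qL k) := ι_anti _ _
lemma sp_anti (k : ℕ) : sL k * pL k = - (pL k * sL k) := ι_anti _ _

lemma sum_ww (d k : ℕ) (h : k ≤ d+1) :
    ∑ j ∈ Finset.range (2*k), (∑ i ∈ Finset.range j, ExteriorAlgebra.ι ℚ (wV d i)) *
      ExteriorAlgebra.ι ℚ (wV d j) = omL k := by
  induction k with
  | zero => simp [omL]
  | succ k ih =>
    rw [show 2*(k+1) = 2*k+1+1 by ring, Finset.sum_range_succ, Finset.sum_range_succ,
      ih (by omega), Finset.sum_range_succ _ (2*k), sum_w d k (by omega),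
      wV_even d k (by omega), wV_odd d k (by omega), omL, omL, Finset.sum_range_succ]
    simp only [mul_sub, add_mul, mul_add, sub_mul, sL_sq, pL_sq, sp_anti]
    abel

/-- The weighted partial sums. -/
def alL (d k : ℕ) : LamOS := ∑ i ∈ Finset.range (2*k), (i : ℚ) • ExteriorAlgebra.ι ℚ (wV d i)

lemma alL_succ (d k : ℕ) (h : k ≤ d) :
    alL d (k+1) = alL d k + (2*k+1 : ℚ) • qL k - pL k + sL k := by
  rw [alL, show 2*(k+1) = 2*k+1+1 by ring, Finset.sum_range_succ, Finset.sum_range_succ,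
      wV_even d k (by omega), wV_odd d k (by omega), alL]
  push_cast
  module

lemma t_comm (k : ℕ) (a : ℕ →₀ ℚ) : Commute (pL k * qL k) (ExteriorAlgebra.ι ℚ a) := by
  show pL k * qL k * _ = _ * (pL k * qL k)
  rw [mul_assoc, qL, ι_anti, mul_neg, ← mul_assoc, pL, ι_anti _ a]
  simp [mul_assoc]

lemma om_comm (k : ℕ) (a : ℕ →₀ ℚ) : Commute (omL k) (ExteriorAlgebra.ι ℚ a) :=
  Commute.sum_left _ _ _ fun j _ => t_comm j a

lemma top_comm (k : ℕ) (a : ℕ →₀ ℚ) : Commute (topL k) (ExteriorAlgebra.ι ℚ a) := by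
  induction k with
  | zero => exact Commute.one_left _
  | succ k ih => exact ih.mul_left (t_comm k a)

lemma om_comm_t (k j : ℕ) : Commute (omL k) (pL j * qL j) :=
  (om_comm k _).mul_right (om_comm k _)

lemma t_sq (k : ℕ) : (pL k * qL k) * (pL k * qL k) = 0 := by
  rw [mul_assoc, ← mul_assoc (qL k), qp_anti, neg_mul, mul_assoc, qL_sq]; simp

lemma top_om (k : ℕ) : topL k * omL k = 0 := by
  induction k with
  | zero => simp [omL]
  | succ k ih =>
    rw [omL, Finset.sum_range_succ, ← omL, topL, mul_add, mul_assoc (topL k), mul_assoc (topL k), t_sq,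
      ← (om_comm_t k k).eq, ← mul_assoc, ih]
    simp

lemma om_pow (k : ℕ) : omL k ^ k = (k.factorial : ℚ) • topL k := by
  induction k with
  | zero => simp [topL]
  | succ k ih =>
    have h0 : omL k ^ (k+1) = 0 := by rw [pow_succ, ih, smul_mul_assoc, top_om, smul_zero]
    have gen : ∀ m : ℕ, (omL k + pL k * qL k) ^ (m+1) =
        omL k ^ (m+1) + ((m : ℚ) + 1) • (omL k ^ m * (pL k * qL k)) := by
      intro m
      induction m with
      | zero => simp
      | succ m ihm =>
        rw [pow_succ, ihm]
        simp only [add_mul, mul_add, smul_mul_assoc, mul_assoc (omL k ^ m) (pL k * qL k), t_sq,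
          ← (om_comm_t k k).eq, mul_zero, smul_zero]
        rw [← mul_assoc (omL k ^ m), ← pow_succ, ← pow_succ]
        push_cast
        module
    rw [omL, Finset.sum_range_succ, ← omL, gen, h0, ih, zero_add, topL, smul_mul_assoc,
      smul_smul, Nat.factorial_succ]
    push_cast
    rfl

lemma top_s (k : ℕ) : topL k * sL k = 0 := by
  induction k with
  | zero => simp [sL, sV]
  | succ k ih =>
    rw [sL_succ, topL, mul_add, mul_assoc (topL k), mul_assoc (topL k), sL, (t_comm k _).eq, ← sL,
      ← mul_assoc (topL k) (sL k), ih, mul_assoc (pL k), qL_sq]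
    simp

lemma t_p (k : ℕ) : pL k * qL k * pL k = 0 := by
  rw [mul_assoc, qp_anti, mul_neg, ← mul_assoc, pL_sq]; simp

lemma t_q (k : ℕ) : pL k * qL k * qL k = 0 := by
  rw [mul_assoc, qL_sq]; simp

lemma alL_comm (d k j : ℕ) : Commute (pL j * qL j) (alL d k) :=
  Commute.sum_right _ _ _ fun i _ => (t_comm j _).smul_right _

lemma top_al (d k : ℕ) (h : k ≤ d+1) : topL k * alL d k = 0 := by
  induction k with
  | zero => simp [alL]
  | succ k ih =>
    rw [alL_succ d k (by omega), topL]
    simp only [mul_add, mul_sub, mul_assoc (topL k), mul_smul_comm, t_p, t_q]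
    rw [(alL_comm d k k).eq, ← mul_assoc, ih (by omega), sL, (t_comm k _).eq, ← sL,
      ← mul_assoc (topL k) (sL k), top_s]
    simp

/-- Ordered products of standard generators. -/
def prodL : ℕ → LamOS
  | 0 => 1
  | k+1 => prodL k * ExteriorAlgebra.ι ℚ (zV k)

lemma topL_eq (k : ℕ) : topL k = prodL (2*k) := by
  induction k with
  | zero => rfl
  | succ k ih => rw [topL, ih, ← mul_assoc]; rfl

lemma prodL_ne (k : ℕ) : prodL k ≠ 0 := by
  have h : ∀ k j, k ≤ j →
      CliffordAlgebra.contractRight (Q := (0 : QuadraticForm ℚ (ℕ →₀ ℚ))) (prodL k)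
        (Finsupp.lapply j) = 0 := by
    intro k
    induction k with
    | zero => intro j _; exact CliffordAlgebra.contractRight_one _ _
    | succ k ih =>
      intro j hj
      have := CliffordAlgebra.contractRight_mul_ι (Q := (0 : QuadraticForm ℚ (ℕ →₀ ℚ)))
        (d := Finsupp.lapply j) (zV k) (prodL k)
      refine this.trans ?_
      rw [ih j (by omega)]
      simp [zV, Finsupp.single_apply, show k ≠ j by omega]
  induction k with
  | zero => exact one_ne_zero
  | succ k ih =>
    intro h0
    have := CliffordAlgebra.contractRight_mul_ι (Q := (0 : QuadraticForm ℚ (ℕ →₀ ℚ)))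
        (d := Finsupp.lapply k) (zV k) (prodL k)
    rw [h k k le_rfl] at this
    have h1 : prodL k * CliffordAlgebra.ι (0 : QuadraticForm ℚ (ℕ →₀ ℚ)) (zV k) = 0 := h0
    rw [h1] at this
    simp [zV] at this
    exact ih this.symm

lemma key_LI (d : ℕ) (x y : ℚ)
    (h : (x • alL d (d+1) + y • sL (d+1)) * omL (d+1) ^ d = 0) : x = 0 ∧ y = 0 := by
  have hpow : ∀ r : LamOS, Commute (omL d) r → (pL d * qL d) * r = 0 → ∀ m : ℕ,
      omL (d+1) ^ m * r = omL d ^ m * r := by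
    intro r hr hr0 m
    induction m with
    | zero => simp
    | succ m ih =>
      have : omL (d+1) * r = r * omL d := by
        rw [omL, Finset.sum_range_succ, ← omL, add_mul, hr0, add_zero, hr.eq]
      rw [pow_succ, mul_assoc, this, ← mul_assoc, ih, mul_assoc, ← hr.eq, ← mul_assoc, ← pow_succ]
  have hf : (d.factorial : ℚ) ≠ 0 := by exact_mod_cast d.factorial_ne_zero
  have fin : ∀ v : ℕ →₀ ℚ, (pL d * qL d) * ExteriorAlgebra.ι ℚ v = 0 →
      topL d * ((x * (2*d+1) + y) • qL d - x • pL d) * ExteriorAlgebra.ι ℚ v = 0 := by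
    intro v hv
    have h1 := congrArg (· * ExteriorAlgebra.ι ℚ v) h
    simp only [zero_mul] at h1
    rw [mul_assoc, hpow _ (om_comm d v) hv d, om_pow, smul_mul_assoc, mul_smul_comm,
      smul_eq_zero_iff_right hf, ← mul_assoc] at h1
    rw [← h1]
    congr 1
    have c1 : (x • alL d (d+1) + y • sL (d+1)) * topL d =
        topL d * (x • alL d (d+1) + y • sL (d+1)) := by
      refine (Commute.add_right ?_ ?_).eq.symm
      · exact (Commute.sum_right _ _ _ fun i _ => (top_comm d _).smul_right _).smul_right _
      · exact (top_comm d _).smul_right _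
    rw [c1, alL_succ d d le_rfl, sL_succ]
    simp only [mul_add, mul_sub, mul_smul_comm, top_al d d (by omega), top_s]
    module
  have ht : topL d * (pL d * qL d) ≠ 0 := by
    have := prodL_ne (2*(d+1))
    rwa [← topL_eq, topL] at this
  have e1 := fin (zV (2*d)) (t_p d)
  have e2 := fin (zV (2*d+1)) (t_q d)
  change _ * pL d = 0 at e1
  change _ * qL d = 0 at e2
  rw [mul_assoc, sub_mul, smul_mul_assoc, smul_mul_assoc, qp_anti, pL_sq] at e1
  rw [mul_assoc, sub_mul, smul_mul_assoc, smul_mul_assoc, qL_sq] at e2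
  simp only [smul_zero, sub_zero, zero_sub, mul_neg, smul_neg, neg_eq_zero, mul_smul_comm,
    smul_eq_zero, ht, or_false] at e1 e2
  subst e2
  simpa using e1

lemma LI_of_le (n d : ℕ) (h : 2*d+2 ≤ n) :
    LinearIndependent ℚ ![aOS n * cOS n ^ d, mOS n * cOS n ^ d] := by
  rw [LinearIndependent.pair_iff]
  intro x y hxy
  have hsub : Finset.range (2*(d+1)) ⊆ Finset.range n :=
    Finset.range_subset_range.2 (by omega)
  have hz : ∀ i ∈ Finset.range n, i ∉ Finset.range (2*(d+1)) →
      ExteriorAlgebra.ι ℚ (wV d i) = 0 := fun i _ hi =>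
    wV_zero d i (by simp only [Finset.mem_range] at hi; omega)
  have hm : phiOS n (wV d) (mOS n) = sL (d+1) := by
    rw [phiOS_m, ← sum_w d (d+1) le_rfl]
    exact (Finset.sum_subset hsub hz).symm
  have hal : ∑ i ∈ Finset.range n, (i : ℚ) • ExteriorAlgebra.ι ℚ (wV d i) = alL d (d+1) :=
    (Finset.sum_subset hsub fun i h1 h2 => by rw [hz i h1 h2, smul_zero]).symm
  have ha : phiOS n (wV d) (aOS n) = ((n : ℚ) - 1) • sL (d+1) - alL d (d+1) := by
    rw [phiOS_a, hal, ← phiOS_m, hm]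
  have hc : phiOS n (wV d) (cOS n) = omL (d+1) := by
    rw [phiOS_c, ← sum_ww d (d+1) le_rfl]
    exact (Finset.sum_subset hsub fun i h1 h2 => by rw [hz i h1 h2, mul_zero]).symm
  have h1 := congrArg (phiOS n (wV d)) hxy
  rw [map_add, map_smul, map_smul, map_mul, map_mul, map_pow, ha, hm, hc, map_zero] at h1
  have h2 : ((-x) • alL d (d+1) + (x * ((n : ℚ) - 1) + y) • sL (d+1)) * omL (d+1) ^ d = 0 := by
    rw [← h1, ← smul_mul_assoc, ← smul_mul_assoc, ← add_mul]
    congr 1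
    module
  obtain ⟨h3, h4⟩ := key_LI d _ _ h2
  have h5 : x = 0 := by simpa using h3
  subst h5
  exact ⟨rfl, by simpa using h4⟩

/-- Let `n ≥ 2` with `n ≠ 3` and let `d ≥ 1`. If `{a·m·c^{d−1}, cᵈ}` is
linearly independent and `dim (OS_n^{S_n})_{2d+1} ≥ 2`, then `{a·cᵈ, m·cᵈ}` is linearly
independent. -/
theorem consecutive_degree_LI_odd (n : ℕ) (hn : 2 ≤ n) (hn3 : n ≠ 3) (d : ℕ) (hd : 1 ≤ d)
    (h1 : LinearIndependent ℚ ![aOS n * mOS n * cOS n ^ (d-1), cOS n ^ d])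
    (h2 : 2 ≤ Module.finrank ℚ (OSinvDeg n (2*d+1))) :
    LinearIndependent ℚ ![aOS n * cOS n ^ d, mOS n * cOS n ^ d] := by
  by_cases h : 2*d+2 ≤ n
  · exact LI_of_le n d h
  · have := OSinvDeg_finrank_le n (2*d+1) (by omega)
    omega

end
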